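/- Assume N ≥ 2, 0 < α < N and p > (N+α)/N, and let {u_n} ⊂ E_λ be a (PS)_c sequence for J_λ. Then, after passing to a subsequence, there exists u ∈ E_λ such that u_n → u pointwise on G and u is a critical point of J_λ: (J'_λ(u), v) = 0 for every v ∈ E_λ. -/

import Mathlib

open scoped BigOperators ENNReal
open Filter

noncomputable section

namespace Choquard

variable {G : Type*}

/-- The word metric on a group with generating set `S`. -/
def wordDist [Group G] (S : Finset G) (x y : G) : ℕ :=
  sInf {k : ℕ | ∃ l : List G, (∀ g ∈ l, g ∈ S) ∧ l.length = k ∧ x⁻¹ * y = l.prod}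

/-- The closed ball of radius `r` about `c` in the word metric. -/
def ball [Group G] (S : Finset G) (c : G) (r : ℝ) : Set G :=
  {x | (wordDist S x c : ℝ) ≤ r}

/-- Polynomial growth of homogeneous dimension `N`. -/
def PolyGrowth [Group G] (S : Finset G) (N : ℕ) : Prop :=
  ∃ C₁ C₂ : ℝ, 0 < C₁ ∧ 0 < C₂ ∧ ∀ r : ℝ, 1 ≤ r →
    C₁ * r ^ N ≤ ((ball S (1 : G) r).ncard : ℝ) ∧
    ((ball S (1 : G) r).ncard : ℝ) ≤ C₂ * r ^ N

/-- Riesz-type asymptotics for the kernel `R`. -/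
def RieszKernel [Group G] (S : Finset G) (N : ℕ) (α : ℝ) (R : G → G → ℝ) : Prop :=
  (∀ x y, 0 < R x y) ∧
  ∃ c₁ c₂ : ℝ, 0 < c₁ ∧ 0 < c₂ ∧ ∀ x y : G, x ≠ y →
    c₁ * (wordDist S x y : ℝ) ^ (α - (N : ℝ)) ≤ R x y ∧
    R x y ≤ c₂ * (wordDist S x y : ℝ) ^ (α - (N : ℝ))

/-- Convolution `(R ∗ f)(x) = Σ_{y ≠ x} R x y f y`. -/
def conv [DecidableEq G] (R : G → G → ℝ) (f : G → ℝ) (x : G) : ℝ :=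
  ∑' y, if y = x then 0 else R x y * f y

/-- The convolution as an extended-nonnegative-real valued sum. -/
def convE [DecidableEq G] (R : G → G → ℝ) (f : G → ℝ) (x : G) : ℝ≥0∞ :=
  ∑' y, if y = x then 0 else ENNReal.ofReal (R x y * f y)

/-- Membership in `ℓ^q(G)`. -/
def Memlp (q : ℝ) (u : G → ℝ) : Prop := Summable fun x => |u x| ^ q

/-- The `ℓ^q` norm. -/
def lpNorm (q : ℝ) (u : G → ℝ) : ℝ := (∑' x, |u x| ^ q) ^ (1 / q)

/-- The `ℓ^∞` norm. -/
def supNorm (u : G → ℝ) : ℝ := ⨆ x, |u x|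

/-- The graph Laplacian `Δu(x) = Σ_{s ∈ S} (u(xs) - u(x))`. -/
def lap [Group G] (S : Finset G) (u : G → ℝ) (x : G) : ℝ :=
  ∑ s ∈ S, (u (x * s) - u x)

/-- The gradient form `∇u∇v(x) = (1/2) Σ_{s ∈ S} (u(xs)-u(x))(v(xs)-v(x))`. -/
def grad [Group G] (S : Finset G) (u v : G → ℝ) (x : G) : ℝ :=
  (1 / 2) * ∑ s ∈ S, (u (x * s) - u x) * (v (x * s) - v x)

/-- The density `|Δu|² + |∇u|² + (1 + λa)u²`. -/
def eDensity [Group G] (S : Finset G) (a : G → ℝ) (lam : ℝ) (u : G → ℝ) (x : G) : ℝ :=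
  (lap S u x) ^ 2 + grad S u u x + (1 + lam * a x) * (u x) ^ 2

/-- Membership in the space `E_λ`. -/
def MemE [Group G] (S : Finset G) (a : G → ℝ) (lam : ℝ) (u : G → ℝ) : Prop :=
  Summable (eDensity S a lam u)

/-- `‖u‖²_{E_λ}`. -/
def normEsq [Group G] (S : Finset G) (a : G → ℝ) (lam : ℝ) (u : G → ℝ) : ℝ :=
  ∑' x, eDensity S a lam u x

/-- `‖u‖_{E_λ}`. -/
def normE [Group G] (S : Finset G) (a : G → ℝ) (lam : ℝ) (u : G → ℝ) : ℝ :=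
  Real.sqrt (normEsq S a lam u)

/-- The inner product `⟨u, v⟩_{E_λ}`. -/
def innerE [Group G] (S : Finset G) (a : G → ℝ) (lam : ℝ) (u v : G → ℝ) : ℝ :=
  ∑' x, (lap S u x * lap S v x + grad S u v x + (1 + lam * a x) * (u x * v x))

/-- The nonlocal term `Σ_G (R_α ∗ |u|^p)|u|^p`. -/
def Dterm [DecidableEq G] (R : G → G → ℝ) (p : ℝ) (u : G → ℝ) : ℝ :=
  ∑' x, conv R (fun y => |u y| ^ p) x * |u x| ^ p

/-- The nonlocal pairing `Σ_G (R_α ∗ |u|^p)|u|^{p-2} u v`. -/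
def Kterm [DecidableEq G] (R : G → G → ℝ) (p : ℝ) (u v : G → ℝ) : ℝ :=
  ∑' x, conv R (fun y => |u y| ^ p) x * (|u x| ^ (p - 2) * u x * v x)

/-- The energy functional `J_λ`. -/
def Jfun [Group G] [DecidableEq G] (S : Finset G) (a : G → ℝ) (lam : ℝ)
    (R : G → G → ℝ) (p : ℝ) (u : G → ℝ) : ℝ :=
  (1 / 2) * normEsq S a lam u - (1 / (2 * p)) * Dterm R p u

/-- The derivative pairing `(J'_λ(u), v)`. -/
def Jd [Group G] [DecidableEq G] (S : Finset G) (a : G → ℝ) (lam : ℝ)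
    (R : G → G → ℝ) (p : ℝ) (u v : G → ℝ) : ℝ :=
  innerE S a lam u v - Kterm R p u v

/-- The Nehari manifold `N_λ`. -/
def nehari [Group G] [DecidableEq G] (S : Finset G) (a : G → ℝ) (lam : ℝ)
    (R : G → G → ℝ) (p : ℝ) : Set (G → ℝ) :=
  {u | MemE S a lam u ∧ u ≠ 0 ∧ Jd S a lam R p u u = 0}

/-- `m_λ = inf_{N_λ} J_λ`. -/
def mlam [Group G] [DecidableEq G] (S : Finset G) (a : G → ℝ) (lam : ℝ)
    (R : G → G → ℝ) (p : ℝ) : ℝ :=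
  sInf (Jfun S a lam R p '' nehari S a lam R p)

/-- The norm of `J'_λ(u)` in the dual space `E_λ*`. -/
def dualNorm [Group G] [DecidableEq G] (S : Finset G) (a : G → ℝ) (lam : ℝ)
    (R : G → G → ℝ) (p : ℝ) (u : G → ℝ) : ℝ :=
  sSup {t : ℝ | ∃ v, MemE S a lam v ∧ normEsq S a lam v ≤ 1 ∧ t = |Jd S a lam R p u v|}

/-- `(PS)_c` sequence for `J_λ`. -/
def PSseq [Group G] [DecidableEq G] (S : Finset G) (a : G → ℝ) (lam : ℝ)
    (R : G → G → ℝ) (p : ℝ) (c : ℝ) (U : ℕ → G → ℝ) : Prop :=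
  (∀ n, MemE S a lam (U n)) ∧
  Tendsto (fun n => Jfun S a lam R p (U n)) atTop (nhds c) ∧
  Tendsto (fun n => dualNorm S a lam R p (U n)) atTop (nhds 0)

/-- The Cayley graph of `(G, S)`. -/
def cayley [Group G] (S : Finset G) : SimpleGraph G :=
  SimpleGraph.fromRel (fun x y => x⁻¹ * y ∈ S)

/-- Condition (A₁): the potential well `Ω = {a = 0}` is nonempty, finite and connected. -/
def CondA1 [Group G] (S : Finset G) (a : G → ℝ) : Prop :=
  {x | a x = 0}.Nonempty ∧ {x | a x = 0}.Finite ∧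
  ((cayley S).induce {x | a x = 0}).Connected

/-- Condition (A₂): some sublevel set `{a ≤ M}` is finite and nonempty. -/
def CondA2 (a : G → ℝ) : Prop :=
  ∃ M : ℝ, 0 < M ∧ {x | a x ≤ M}.Finite ∧ {x | a x ≤ M}.Nonempty

/-- The density `|Δu|² + |∇u|² + u²` of the `W^{2,2}` norm. -/
def wDensity [Group G] (S : Finset G) (u : G → ℝ) (x : G) : ℝ :=
  (lap S u x) ^ 2 + grad S u u x + (u x) ^ 2

/-- Membership in `W^{2,2}(G)`. -/
def MemW [Group G] (S : Finset G) (u : G → ℝ) : Prop := Summable (wDensity S u)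

/-- `‖u‖²_{W^{2,2}}`. -/
def normWsq [Group G] (S : Finset G) (u : G → ℝ) : ℝ := ∑' x, wDensity S u x

/-- Membership in `E(Ω)`: vanishing outside `Ω`. -/
def MemEOm (Ω : Set G) (u : G → ℝ) : Prop := ∀ x ∉ Ω, u x = 0

/-- `‖u‖²_{E(Ω)}`. -/
def normOmSq [Group G] (S : Finset G) (Ω : Set G) (u : G → ℝ) : ℝ :=
  (∑' x, ((lap S u x) ^ 2 + grad S u u x)) + ∑' x : Ω, (u (x : G)) ^ 2

/-- The nonlocal term over `Ω`. -/
def DtermOm [DecidableEq G] (Ω : Set G) (R : G → G → ℝ) (p : ℝ) (u : G → ℝ) : ℝ :=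
  ∑' x : Ω, conv R (fun y => |u y| ^ p) (x : G) * |u (x : G)| ^ p

/-- The limiting energy functional `J_Ω`. -/
def JOm [Group G] [DecidableEq G] (S : Finset G) (Ω : Set G) (R : G → G → ℝ) (p : ℝ)
    (u : G → ℝ) : ℝ :=
  (1 / 2) * normOmSq S Ω u - (1 / (2 * p)) * DtermOm Ω R p u

/-- The derivative pairing `(J'_Ω(u), v)`. -/
def JdOm [Group G] [DecidableEq G] (S : Finset G) (Ω : Set G) (R : G → G → ℝ) (p : ℝ)
    (u v : G → ℝ) : ℝ :=
  (∑' x, (lap S u x * lap S v x + grad S u v x)) + (∑' x : Ω, u (x : G) * v (x : G))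
    - ∑' x : Ω, conv R (fun y => |u y| ^ p) (x : G) * (|u (x : G)| ^ (p - 2) * u (x : G) * v (x : G))

/-- The Nehari manifold `N_Ω`. -/
def nehariOm [Group G] [DecidableEq G] (S : Finset G) (Ω : Set G) (R : G → G → ℝ)
    (p : ℝ) : Set (G → ℝ) :=
  {u | MemEOm Ω u ∧ u ≠ 0 ∧ JdOm S Ω R p u u = 0}

/-- `m_Ω = inf_{N_Ω} J_Ω`. -/
def mOm [Group G] [DecidableEq G] (S : Finset G) (Ω : Set G) (R : G → G → ℝ) (p : ℝ) : ℝ :=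
  sInf (JOm S Ω R p '' nehariOm S Ω R p)

/-!
Since `(p - 1)‖u‖² = 2p J(u) - (J'(u), u)`, a Palais-Smale sequence is bounded in `E_λ`, hence in
`ℓ²`. A subsequence converges pointwise, and by Fatou's lemma the limit `u` lies in `E_λ`. It
remains to see that `(J'(u_n), v) → (J'(u), v)` for every `v ∈ E_λ`.

Both sums making up `(J'(u_n), v)` are dominated by a fixed summable function up to errors of
arbitrarily small `ℓ¹` norm, so that the pointwise limit passes to the sum. For the inner product
this is Young's inequality. For the nonlocal term choose `s ≥ 1` with `p ≥ 2 - 1/s` and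
`(N - α) s > N`, which is possible because `p > (N + α)/N`; the latter inequality puts the rows
and columns of `R_α` in `ℓˢ`. For `|u|, |v|` bounded in `ℓ²`, the inequality `x ≤ 1 + xˢ` gives
`R_α(x,y) |u(y)|ᵖ |v(x)|ᵖ ≤ δ (u(y)² v(x)² + R_α(x,y)ˢ u(y)²) + C R_α(x,y)ˢ v(x)²`,
where the first term is small in `ℓ¹` uniformly in `u` and the second does not depend on `u`.
-/

section AlmostDominated

variable {ι X : Type*}

/-- A family of functions dominated by a summable function up to errors of arbitrarily small
`ℓ¹` norm. For the counting measure this is uniform integrability together with tightness; it is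
the hypothesis under which pointwise limits may be exchanged with sums. -/
def AlmostDominated (f : ι → X → ℝ) : Prop :=
  ∀ ε > 0, ∃ Y : X → ℝ, Summable Y ∧ ∀ i, ∃ h : X → ℝ,
    Summable h ∧ (∀ x, 0 ≤ h x) ∧ ∑' x, h x ≤ ε ∧ ∀ x, |f i x| ≤ h x + Y x

lemma almostDominated_const {g : X → ℝ} (hg : Summable g) :
    AlmostDominated fun _ : ι => g := fun _ε hε =>
  ⟨fun x => |g x|, hg.abs, fun _ => ⟨0, summable_zero, fun _ => le_rfl, by simpa using hε.le,
    fun x => by simp⟩⟩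

lemma AlmostDominated.summable {f : ι → X → ℝ} (hf : AlmostDominated f) (i : ι) :
    Summable (f i) := by
  obtain ⟨Y, hY, hfY⟩ := hf 1 one_pos
  obtain ⟨h, hh, -, -, hle⟩ := hfY i
  exact .of_norm_bounded (hh.add hY) hle

lemma AlmostDominated.of_forall_abs_le {f g h : ι → X → ℝ} {B : ℝ}
    (hg : ∀ i, Summable (g i)) (hg0 : ∀ i x, 0 ≤ g i x) (hgB : ∀ i, ∑' x, g i x ≤ B)
    (hh : AlmostDominated h)
    (hf : ∀ δ > 0, ∃ C, 0 ≤ C ∧ ∀ i x, |f i x| ≤ δ * g i x + C * h i x) :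
    AlmostDominated f := by
  intro ε hε
  set δ := ε / (2 * (|B| + 1)) with hδ
  obtain ⟨C, hC, hfC⟩ := hf δ (by positivity)
  obtain ⟨Y, hY, hhY⟩ := hh (ε / (2 * (C + 1))) (by positivity)
  refine ⟨fun x => C * Y x, hY.mul_left C, fun i => ?_⟩
  obtain ⟨e, he, he0, hle, hhe⟩ := hhY i
  refine ⟨fun x => δ * g i x + C * e x, ((hg i).mul_left δ).add (he.mul_left C),
    fun x => ?_, ?_, fun x => ?_⟩
  · have := hg0 i x
    have := he0 x
    positivity
  · have hB : δ * (|B| + 1) = ε / 2 := by rw [hδ]; field_simp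
    have hC' : (C + 1) * (ε / (2 * (C + 1))) = ε / 2 := by field_simp
    calc ∑' x, (δ * g i x + C * e x) = δ * ∑' x, g i x + C * ∑' x, e x := by
          rw [((hg i).mul_left δ).tsum_add (he.mul_left C), tsum_mul_left, tsum_mul_left]
      _ ≤ δ * (|B| + 1) + (C + 1) * (ε / (2 * (C + 1))) := by
          gcongr
          · linarith [hgB i, le_abs_self B]
          · exact tsum_nonneg he0
          · linarith
      _ = ε := by rw [hB, hC']; ring
  · calc |f i x| ≤ δ * g i x + C * h i x := hfC i x
      _ ≤ δ * g i x + C * (e x + Y x) := by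
          gcongr
          exact (le_abs_self _).trans (hhe x)
      _ = δ * g i x + C * e x + C * Y x := by ring

-- The positive part of `|f i - g|` minus the small error is genuinely dominated and tends to `0`.
theorem AlmostDominated.tendsto_tsum {l : Filter ι} {f : ι → X → ℝ} {g : X → ℝ}
    (hf : AlmostDominated f) (hg : Summable g)
    (hlim : ∀ x, Tendsto (fun i => f i x) l (nhds (g x))) :
    Tendsto (fun i => ∑' x, f i x) l (nhds (∑' x, g x)) := by
  rw [Metric.tendsto_nhds]
  intro ε hε
  obtain ⟨Y, hY, hfY⟩ := hf (ε / 2) (half_pos hε)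
  choose h hh hh0 hhε hfh using hfY
  let excess : ι → X → ℝ := fun i x => max (|f i x - g x| - h i x) 0
  have excess_nonneg : ∀ i x, 0 ≤ excess i x := fun i x => le_max_right _ _
  have excess_le : ∀ i x, ‖excess i x‖ ≤ |Y x| + |g x| := fun i x => by
    rw [Real.norm_of_nonneg (excess_nonneg i x)]
    refine max_le ?_ (by positivity)
    linarith [abs_sub (f i x) (g x), hfh i x, le_abs_self (Y x)]
  have excess_summable : ∀ i, Summable (excess i) := fun i =>
    .of_norm_bounded (hY.abs.add hg.abs) (excess_le i)
  have excess_tendsto : ∀ x, Tendsto (fun i => excess i x) l (nhds 0) := fun x => by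
    refine squeeze_zero (fun i => excess_nonneg i x) (fun i => max_le ?_ (abs_nonneg _))
      (tendsto_iff_norm_sub_tendsto_zero.1 (hlim x))
    exact sub_le_self _ (hh0 i x)
  have tsum_excess_tendsto : Tendsto (fun i => ∑' x, excess i x) l (nhds 0) := by
    simpa using tendsto_tsum_of_dominated_convergence (hY.abs.add hg.abs) excess_tendsto
      (.of_forall excess_le)
  filter_upwards [tsum_excess_tendsto.eventually_lt_const (half_pos hε)] with i hi
  have dist_le : ∀ x, ‖f i x - g x‖ ≤ excess i x + h i x := fun x =>
    sub_le_iff_le_add.1 (le_max_left _ _)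
  calc dist (∑' x, f i x) (∑' x, g x) = ‖∑' x, (f i x - g x)‖ := by
        rw [dist_eq_norm, (hf.summable i).tsum_sub hg]
    _ ≤ ∑' x, (excess i x + h i x) :=
        tsum_of_norm_bounded ((excess_summable i).add (hh i)).hasSum dist_le
    _ = ∑' x, excess i x + ∑' x, h i x := (excess_summable i).tsum_add (hh i)
    _ < ε := by linarith [hhε i]

end AlmostDominated

section ScalarInequalities

lemma self_le_one_add_rpow {x s : ℝ} (hx : 0 ≤ x) (hs : 1 ≤ s) : x ≤ 1 + x ^ s := by
  rcases le_total x 1 with h | h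
  · linarith [Real.rpow_nonneg hx s]
  · linarith [Real.self_le_rpow_of_one_le h hs]

-- This is `x ≤ 1 + x ^ s` at `x = κ * τ ^ (p - 2) / δ`, multiplied by `δ * τ ^ 2`.
lemma mul_rpow_le_sq_add {p s κ τ δ : ℝ} (hp : p ≠ 0) (hs : 1 ≤ s) (hκ : 0 ≤ κ) (hτ : 0 ≤ τ)
    (hδ : 0 < δ) :
    κ * τ ^ p ≤ δ * τ ^ 2 + δ ^ (1 - s) * κ ^ s * τ ^ (2 + (p - 2) * s) := by
  rcases hτ.eq_or_lt with rfl | hτ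
  · rw [Real.zero_rpow hp, mul_zero]
    positivity
  have hp2 : τ ^ p = τ ^ 2 * τ ^ (p - 2) := by
    rw [← Real.rpow_natCast, ← Real.rpow_add hτ]
    norm_num
  calc κ * τ ^ p = δ * τ ^ 2 * (κ * τ ^ (p - 2) / δ) := by rw [hp2]; field_simp
    _ ≤ δ * τ ^ 2 * (1 + (κ * τ ^ (p - 2) / δ) ^ s) := by
        gcongr
        exact self_le_one_add_rpow (by positivity) hs
    _ = _ := by
        rw [Real.div_rpow (by positivity) hδ.le, Real.mul_rpow hκ (by positivity),
          ← Real.rpow_mul hτ.le, Real.rpow_add hτ, Real.rpow_sub hδ, Real.rpow_one,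
          Real.rpow_ofNat]
        field_simp

-- Only `κ ^ s * b ^ 2` carries a large constant: `b` will come from a fixed test function, while
-- `a` varies along the Palais-Smale sequence.
lemma exists_mul_rpow_mul_le {p s M δ : ℝ} (hp : p ≠ 0) (hs : 1 ≤ s) (hps : 2 - 1 / s ≤ p)
    (hδ : 0 < δ) :
    ∃ C, 0 ≤ C ∧ ∀ κ a b : ℝ, 0 ≤ κ → 0 ≤ a → 0 ≤ b → a * b ≤ M →
      κ * (a * b) ^ p ≤ δ * (a ^ 2 * b ^ 2 + κ ^ s * a ^ 2) + C * (κ ^ s * b ^ 2) := by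
  have hr : 0 ≤ 1 + (p - 2) * s := by
    have : s * (2 - 1 / s) = 2 * s - 1 := by field_simp
    nlinarith
  set c := δ ^ (1 - s) * M ^ (1 + (p - 2) * s)
  refine ⟨c ^ 2 / δ, by positivity, fun κ a b hκ ha hb hM => ?_⟩
  have hab : 0 ≤ a * b := mul_nonneg ha hb
  have hM0 : 0 ≤ M := hab.trans hM
  have hpow : (a * b) ^ (2 + (p - 2) * s) ≤ M ^ (1 + (p - 2) * s) * (a * b) := by
    rw [show 2 + (p - 2) * s = 1 + (p - 2) * s + 1 by ring,
      Real.rpow_add_one' hab (by positivity)]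
    gcongr
  have amgm : c * (a * b) ≤ δ * a ^ 2 + c ^ 2 / δ * b ^ 2 := by
    have h : 0 ≤ (δ * a - c * b) ^ 2 / δ + c * (a * b) := by positivity
    have e : (δ * a - c * b) ^ 2 / δ = δ * a ^ 2 + c ^ 2 / δ * b ^ 2 - 2 * (c * (a * b)) := by
      field_simp
      ring
    linarith
  calc κ * (a * b) ^ p
      ≤ δ * (a * b) ^ 2 + δ ^ (1 - s) * κ ^ s * (a * b) ^ (2 + (p - 2) * s) :=
        mul_rpow_le_sq_add hp hs hκ hab hδ
    _ ≤ δ * (a * b) ^ 2 + δ ^ (1 - s) * κ ^ s * (M ^ (1 + (p - 2) * s) * (a * b)) := by gcongr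
    _ = δ * (a * b) ^ 2 + κ ^ s * (c * (a * b)) := by ring
    _ ≤ δ * (a * b) ^ 2 + κ ^ s * (δ * a ^ 2 + c ^ 2 / δ * b ^ 2) := by gcongr
    _ = _ := by ring

lemma rpow_sub_one_mul_le {p δ b c : ℝ} (hp : 1 < p) (hδ : 0 < δ) (hb : 0 ≤ b) (hc : 0 ≤ c) :
    b ^ (p - 1) * c ≤ δ * b ^ p + δ ^ (1 - p) * c ^ p := by
  have hsplit : ∀ t : ℝ, 0 ≤ t → t ^ p = t ^ (p - 1) * t := fun t ht => by
    rw [← Real.rpow_add_one' ht (by linarith), sub_add_cancel]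
  have hδc : δ * (c / δ) ^ p = δ ^ (1 - p) * c ^ p := by
    rw [Real.div_rpow hc hδ.le, Real.rpow_sub hδ, Real.rpow_one]
    ring
  rw [← hδc, ← mul_add]
  have key : b ^ (p - 1) * (c / δ) ≤ b ^ p + (c / δ) ^ p := by
    have : 0 ≤ p - 1 := by linarith
    have hcδ : 0 ≤ c / δ := by positivity
    rcases le_total b (c / δ) with h | h
    · have : b ^ (p - 1) * (c / δ) ≤ (c / δ) ^ p := by rw [hsplit _ hcδ]; gcongr
      linarith [Real.rpow_nonneg hb p]
    · have : b ^ (p - 1) * (c / δ) ≤ b ^ p := by rw [hsplit _ hb]; gcongr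
      linarith [Real.rpow_nonneg hcδ p]
  calc b ^ (p - 1) * c = δ * (b ^ (p - 1) * (c / δ)) := by field_simp
    _ ≤ _ := by gcongr

lemma abs_rpow_sub_two_mul_self {p : ℝ} (hp : 1 < p) (t : ℝ) :
    |(|t| ^ (p - 2) * t)| = |t| ^ (p - 1) := by
  rw [abs_mul, abs_of_nonneg (by positivity), ← Real.rpow_add_one' (abs_nonneg t) (by linarith)]
  ring_nf

lemma continuous_abs_rpow_sub_two_mul_self {p : ℝ} (hp : 1 < p) :
    Continuous fun t : ℝ => |t| ^ (p - 2) * t := by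
  have hderiv : deriv (fun t : ℝ => |t| ^ p) = fun t => p * (|t| ^ (p - 2) * t) := by
    ext t
    rw [(hasDerivAt_abs_rpow t hp).deriv, mul_assoc]
  have hcont := (contDiff_norm_rpow (E := ℝ) hp).continuous_deriv le_rfl
  simp only [Real.norm_eq_abs, hderiv] at hcont
  have hp0 : p ≠ 0 := by linarith
  simpa [hp0] using hcont.const_mul p⁻¹

end ScalarInequalities

section SchurKernels

variable {X : Type*} {s Z : ℝ} {K : X → X → ℝ}

/-- The rows and columns of the kernel `K` have `∑ |K|ˢ ≤ Z`. On a group this holds for every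
kernel bounded by `k (y⁻¹ * x)` with `k ∈ ℓˢ`; it is the form in which the decay of `R_α` enters. -/
structure SchurBound (s : ℝ) (K : X → X → ℝ) (Z : ℝ) : Prop where
  summable_row : ∀ x, Summable fun y => |K x y| ^ s
  tsum_row_le : ∀ x, ∑' y, |K x y| ^ s ≤ Z
  summable_col : ∀ y, Summable fun x => |K x y| ^ s
  tsum_col_le : ∀ y, ∑' x, |K x y| ^ s ≤ Z

namespace SchurBound

lemma swap (hK : SchurBound s K Z) : SchurBound s (fun x y => K y x) Z :=
  ⟨hK.summable_col, hK.tsum_col_le, hK.summable_row, hK.tsum_row_le⟩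

variable {g : X → ℝ}

lemma tsum_row_mul_le (hK : SchurBound s K Z) (hg0 : ∀ x, 0 ≤ g x) (x : X) :
    ∑' y, |K x y| ^ s * g x ≤ Z * g x := by
  rw [tsum_mul_right]
  exact mul_le_mul_of_nonneg_right (hK.tsum_row_le x) (hg0 x)

lemma summable_mul_fst (hK : SchurBound s K Z) (hg : Summable g) (hg0 : ∀ x, 0 ≤ g x) :
    Summable fun z : X × X => |K z.1 z.2| ^ s * g z.1 := by
  have nonneg : ∀ z : X × X, 0 ≤ |K z.1 z.2| ^ s * g z.1 := fun z =>
    mul_nonneg (by positivity) (hg0 z.1)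
  exact (summable_prod_of_nonneg nonneg).2 ⟨fun x => (hK.summable_row x).mul_right (g x),
    .of_nonneg_of_le (fun x => tsum_nonneg fun y => nonneg (x, y)) (hK.tsum_row_mul_le hg0)
      (hg.mul_left Z)⟩

lemma tsum_mul_fst_le (hK : SchurBound s K Z) (hg : Summable g) (hg0 : ∀ x, 0 ≤ g x) :
    ∑' z : X × X, |K z.1 z.2| ^ s * g z.1 ≤ Z * ∑' x, g x := by
  have hsum := hK.summable_mul_fst hg hg0
  rw [hsum.tsum_prod, ← tsum_mul_left]
  exact hsum.prod.tsum_le_tsum (hK.tsum_row_mul_le hg0) (hg.mul_left Z)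

lemma summable_mul_snd (hK : SchurBound s K Z) (hg : Summable g) (hg0 : ∀ x, 0 ≤ g x) :
    Summable fun z : X × X => |K z.1 z.2| ^ s * g z.2 :=
  (hK.swap.summable_mul_fst hg hg0).prod_symm

lemma tsum_mul_snd_le (hK : SchurBound s K Z) (hg : Summable g) (hg0 : ∀ x, 0 ≤ g x) :
    ∑' z : X × X, |K z.1 z.2| ^ s * g z.2 ≤ Z * ∑' x, g x := by
  rw [← (Equiv.prodComm X X).tsum_eq]
  exact hK.swap.tsum_mul_fst_le hg hg0

end SchurBound

lemma schurBound_of_abs_rpow_le {G : Type*} [Group G] {K : G → G → ℝ} {z : G → ℝ}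
    (hz : Summable z) (hK : ∀ x y, |K x y| ^ s ≤ z (y⁻¹ * x)) : SchurBound s K (∑' g, z g) := by
  have row_summable (x : G) : Summable fun y => z (y⁻¹ * x) :=
    ((Equiv.inv G).trans (Equiv.mulRight x)).summable_iff.2 hz
  have row_tsum (x : G) : ∑' y, z (y⁻¹ * x) = ∑' g, z g :=
    ((Equiv.inv G).trans (Equiv.mulRight x)).tsum_eq z
  have col_summable (y : G) : Summable fun x => z (y⁻¹ * x) :=
    (Equiv.mulLeft y⁻¹).summable_iff.2 hz
  have col_tsum (y : G) : ∑' x, z (y⁻¹ * x) = ∑' g, z g := (Equiv.mulLeft y⁻¹).tsum_eq z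
  have summable_row (x : G) : Summable fun y => |K x y| ^ s :=
    .of_nonneg_of_le (fun y => by positivity) (hK x) (row_summable x)
  have summable_col (y : G) : Summable fun x => |K x y| ^ s :=
    .of_nonneg_of_le (fun x => by positivity) (hK · y) (col_summable y)
  exact ⟨summable_row,
    fun x => ((summable_row x).tsum_le_tsum (hK x) (row_summable x)).trans_eq (row_tsum x),
    summable_col,
    fun y => ((summable_col y).tsum_le_tsum (hK · y) (col_summable y)).trans_eq (col_tsum y)⟩

end SchurKernels

section L2Ball

variable {X : Type*} {A : ℝ} {u v : X → ℝ}

/-- The functions with `∑ u² ≤ A`, that is the closed ball of radius `√A` in `ℓ²`. -/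
def l2Ball (X : Type*) (A : ℝ) : Set (X → ℝ) :=
  {u | Summable (fun x => u x ^ 2) ∧ ∑' x, u x ^ 2 ≤ A}

lemma abs_le_sqrt_of_mem_l2Ball (hu : u ∈ l2Ball X A) (x : X) : |u x| ≤ √A :=
  Real.abs_le_sqrt ((hu.1.le_tsum x fun y _ => sq_nonneg (u y)).trans hu.2)

lemma abs_mul_abs_le_of_mem_l2Ball (hu : u ∈ l2Ball X A) (hv : v ∈ l2Ball X A) (x y : X) :
    |u y| * |v x| ≤ A := by
  have hA : 0 ≤ A := (tsum_nonneg fun y => sq_nonneg (u y)).trans hu.2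
  calc |u y| * |v x| ≤ √A * √A := by
        gcongr
        exacts [abs_le_sqrt_of_mem_l2Ball hu y, abs_le_sqrt_of_mem_l2Ball hv x]
    _ = A := Real.mul_self_sqrt hA

lemma summable_sq_mul_sq (hu : u ∈ l2Ball X A) (hv : v ∈ l2Ball X A) :
    Summable fun z : X × X => u z.2 ^ 2 * v z.1 ^ 2 :=
  (hu.1.mul_of_nonneg hv.1 (fun _ => sq_nonneg _) fun _ => sq_nonneg _).prod_symm

lemma tsum_sq_mul_sq_le (hu : u ∈ l2Ball X A) (hv : v ∈ l2Ball X A) :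
    ∑' z : X × X, u z.2 ^ 2 * v z.1 ^ 2 ≤ A * A := by
  have hprod : Summable fun z : X × X => u z.1 ^ 2 * v z.2 ^ 2 :=
    hu.1.mul_of_nonneg hv.1 (fun _ => sq_nonneg _) fun _ => sq_nonneg _
  have hv0 : 0 ≤ ∑' x, v x ^ 2 := tsum_nonneg fun x => sq_nonneg (v x)
  calc ∑' z : X × X, u z.2 ^ 2 * v z.1 ^ 2 = ∑' z : X × X, u z.1 ^ 2 * v z.2 ^ 2 :=
        (Equiv.prodComm X X).tsum_eq fun z => u z.1 ^ 2 * v z.2 ^ 2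
    _ = (∑' x, u x ^ 2) * ∑' x, v x ^ 2 := (hu.1.tsum_mul_tsum hv.1 hprod).symm
    _ ≤ A * A := mul_le_mul hu.2 hv.2 hv0 (hv0.trans hv.2)

lemma exists_subseq_tendsto_of_mem_l2Ball [Countable X] {U : ℕ → X → ℝ}
    (hU : ∀ n, U n ∈ l2Ball X A) :
    ∃ u, ∃ φ : ℕ → ℕ, StrictMono φ ∧ Tendsto (U ∘ φ) atTop (nhds u) := by
  have hcompact : IsCompact (Set.univ.pi fun _ : X => Set.Icc (-√A) √A) :=
    isCompact_univ_pi fun _ => isCompact_Icc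
  obtain ⟨u, -, φ, hφ, hlim⟩ := hcompact.tendsto_subseq fun n x _ =>
    abs_le.1 (abs_le_sqrt_of_mem_l2Ball (hU n) x)
  exact ⟨u, φ, hφ, hlim⟩

end L2Ball

section NonlocalTerm

variable {ι X : Type*} {K : X → X → ℝ} {p s Z A : ℝ}

/-- The density `|K(x, y)| |u(y)|ᵖ |v(x)|ᵖ` on `X × X`; for `u = v` and `K = R_α` its sum is the
nonlocal part of the energy. -/
def nonlocalDensity (K : X → X → ℝ) (p : ℝ) (u v : X → ℝ) (z : X × X) : ℝ :=
  |K z.1 z.2| * (|u z.2| * |v z.1|) ^ p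

/-- The density `K(x, y) |u(y)|ᵖ |u(x)|ᵖ⁻² u(x) v(x)` on `X × X` whose sum is the nonlocal part of
the pairing `(J'(u), v)`. -/
def pairingDensity (K : X → X → ℝ) (p : ℝ) (u v : X → ℝ) (z : X × X) : ℝ :=
  K z.1 z.2 * |u z.2| ^ p * (|u z.1| ^ (p - 2) * u z.1 * v z.1)

lemma nonlocalDensity_nonneg (K : X → X → ℝ) (p : ℝ) (u v : X → ℝ) (z : X × X) :
    0 ≤ nonlocalDensity K p u v z := by
  unfold nonlocalDensity
  positivity

lemma exists_nonlocalDensity_le (hp : p ≠ 0) (hs : 1 ≤ s) (hps : 2 - 1 / s ≤ p)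
    (K : X → X → ℝ) (A : ℝ) {δ : ℝ} (hδ : 0 < δ) :
    ∃ C, 0 ≤ C ∧ ∀ u ∈ l2Ball X A, ∀ v ∈ l2Ball X A, ∀ z, nonlocalDensity K p u v z ≤
      δ * (u z.2 ^ 2 * v z.1 ^ 2 + |K z.1 z.2| ^ s * u z.2 ^ 2)
        + C * (|K z.1 z.2| ^ s * v z.1 ^ 2) := by
  obtain ⟨C, hC, hle⟩ := exists_mul_rpow_mul_le (M := A) hp hs hps hδ
  refine ⟨C, hC, fun u hu v hv z => ?_⟩
  simpa only [nonlocalDensity, sq_abs] using hle |K z.1 z.2| |u z.2| |v z.1| (abs_nonneg _)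
    (abs_nonneg _) (abs_nonneg _) (abs_mul_abs_le_of_mem_l2Ball hu hv z.1 z.2)

namespace SchurBound

lemma summable_sq_mul_sq_add (hK : SchurBound s K Z) {u v : X → ℝ}
    (hu : u ∈ l2Ball X A) (hv : v ∈ l2Ball X A) :
    Summable fun z : X × X => u z.2 ^ 2 * v z.1 ^ 2 + |K z.1 z.2| ^ s * u z.2 ^ 2 :=
  (summable_sq_mul_sq hu hv).add (hK.summable_mul_snd hu.1 fun _ => sq_nonneg _)

lemma tsum_sq_mul_sq_add_le (hK : SchurBound s K Z) {u v : X → ℝ}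
    (hu : u ∈ l2Ball X A) (hv : v ∈ l2Ball X A) :
    ∑' z : X × X, (u z.2 ^ 2 * v z.1 ^ 2 + |K z.1 z.2| ^ s * u z.2 ^ 2) ≤ A * A + |Z| * A := by
  rw [(summable_sq_mul_sq hu hv).tsum_add (hK.summable_mul_snd hu.1 fun _ => sq_nonneg _)]
  refine add_le_add (tsum_sq_mul_sq_le hu hv)
    ((hK.tsum_mul_snd_le hu.1 fun _ => sq_nonneg _).trans ?_)
  exact mul_le_mul (le_abs_self Z) hu.2 (tsum_nonneg fun _ => sq_nonneg _) (abs_nonneg Z)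

lemma exists_tsum_nonlocalDensity_le (hK : SchurBound s K Z) (hp : p ≠ 0) (hs : 1 ≤ s)
    (hps : 2 - 1 / s ≤ p) (A : ℝ) :
    ∃ C, ∀ u ∈ l2Ball X A, ∀ v ∈ l2Ball X A,
      Summable (nonlocalDensity K p u v) ∧ ∑' z, nonlocalDensity K p u v z ≤ C := by
  obtain ⟨C, hC, hle⟩ := exists_nonlocalDensity_le hp hs hps K A one_pos
  refine ⟨1 * (A * A + |Z| * A) + C * (|Z| * A), fun u hu v hv => ?_⟩
  have hg := (hK.summable_sq_mul_sq_add hu hv).mul_left 1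
  have hh := (hK.summable_mul_fst hv.1 fun _ => sq_nonneg _).mul_left C
  have hsum : Summable (nonlocalDensity K p u v) :=
    .of_nonneg_of_le (nonlocalDensity_nonneg K p u v) (hle u hu v hv) (hg.add hh)
  refine ⟨hsum, (hsum.tsum_le_tsum (hle u hu v hv) (hg.add hh)).trans ?_⟩
  rw [hg.tsum_add hh, tsum_mul_left, tsum_mul_left]
  gcongr
  · exact hK.tsum_sq_mul_sq_add_le hu hv
  · refine (hK.tsum_mul_fst_le hv.1 fun _ => sq_nonneg _).trans ?_
    exact mul_le_mul (le_abs_self Z) hv.2 (tsum_nonneg fun _ => sq_nonneg _) (abs_nonneg Z)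

lemma almostDominated_nonlocalDensity (hK : SchurBound s K Z) (hp : p ≠ 0) (hs : 1 ≤ s)
    (hps : 2 - 1 / s ≤ p) {U : ι → X → ℝ} {v : X → ℝ} (hU : ∀ i, U i ∈ l2Ball X A)
    (hv : v ∈ l2Ball X A) : AlmostDominated fun i => nonlocalDensity K p (U i) v := by
  refine .of_forall_abs_le (fun i => hK.summable_sq_mul_sq_add (hU i) hv)
    (fun i z => by positivity) (fun i => hK.tsum_sq_mul_sq_add_le (hU i) hv)
    (almostDominated_const (hK.summable_mul_fst hv.1 fun _ => sq_nonneg _)) fun δ hδ => ?_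
  obtain ⟨C, hC, hle⟩ := exists_nonlocalDensity_le hp hs hps K A hδ
  refine ⟨C, hC, fun i z => ?_⟩
  rw [abs_of_nonneg (nonlocalDensity_nonneg K p (U i) v z)]
  exact hle _ (hU i) v hv z

end SchurBound

lemma abs_pairingDensity_le (hp : 1 < p) {δ : ℝ} (hδ : 0 < δ) (K : X → X → ℝ) (u v : X → ℝ)
    (z : X × X) :
    |pairingDensity K p u v z| ≤
      δ * nonlocalDensity K p u u z + δ ^ (1 - p) * nonlocalDensity K p u v z := by
  unfold pairingDensity nonlocalDensity
  calc |K z.1 z.2 * |u z.2| ^ p * (|u z.1| ^ (p - 2) * u z.1 * v z.1)|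
      = |K z.1 z.2| * |u z.2| ^ p * (|u z.1| ^ (p - 1) * |v z.1|) := by
        rw [abs_mul, abs_mul, abs_mul (_ * _), abs_rpow_sub_two_mul_self hp,
          abs_of_nonneg (by positivity : 0 ≤ |u z.2| ^ p)]
    _ ≤ |K z.1 z.2| * |u z.2| ^ p * (δ * |u z.1| ^ p + δ ^ (1 - p) * |v z.1| ^ p) := by
        gcongr
        exact rpow_sub_one_mul_le hp hδ (abs_nonneg _) (abs_nonneg _)
    _ = _ := by
        rw [Real.mul_rpow (abs_nonneg _) (abs_nonneg _), Real.mul_rpow (abs_nonneg _)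
          (abs_nonneg _)]
        ring

namespace SchurBound

lemma exists_abs_tsum_pairingDensity_le (hK : SchurBound s K Z) (hp : 1 < p) (hs : 1 ≤ s)
    (hps : 2 - 1 / s ≤ p) (A : ℝ) :
    ∃ C, ∀ u ∈ l2Ball X A, ∀ v ∈ l2Ball X A,
      Summable (pairingDensity K p u v) ∧ |∑' z, pairingDensity K p u v z| ≤ C := by
  obtain ⟨C, hC⟩ := hK.exists_tsum_nonlocalDensity_le (by linarith) hs hps A
  refine ⟨C + C, fun u hu v hv => ?_⟩
  obtain ⟨huu, huu_le⟩ := hC u hu u hu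
  obtain ⟨huv, huv_le⟩ := hC u hu v hv
  have hle (z : X × X) : ‖pairingDensity K p u v z‖ ≤
      nonlocalDensity K p u u z + nonlocalDensity K p u v z := by
    simpa using abs_pairingDensity_le hp one_pos K u v z
  refine ⟨.of_norm_bounded (huu.add huv) hle,
    (tsum_of_norm_bounded (huu.add huv).hasSum hle).trans ?_⟩
  rw [huu.tsum_add huv]
  exact add_le_add huu_le huv_le

lemma almostDominated_pairingDensity (hK : SchurBound s K Z) (hp : 1 < p) (hs : 1 ≤ s)
    (hps : 2 - 1 / s ≤ p) {U : ι → X → ℝ} {v : X → ℝ} (hU : ∀ i, U i ∈ l2Ball X A)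
    (hv : v ∈ l2Ball X A) : AlmostDominated fun i => pairingDensity K p (U i) v := by
  have hp0 : p ≠ 0 := by linarith
  obtain ⟨C, hC⟩ := hK.exists_tsum_nonlocalDensity_le hp0 hs hps A
  refine .of_forall_abs_le (fun i => (hC _ (hU i) _ (hU i)).1)
    (fun i => nonlocalDensity_nonneg K p (U i) (U i)) (fun i => (hC _ (hU i) _ (hU i)).2)
    (hK.almostDominated_nonlocalDensity hp0 hs hps hU hv) fun δ hδ => ?_
  exact ⟨δ ^ (1 - p), by positivity, fun i => abs_pairingDensity_le hp hδ K (U i) v⟩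

end SchurBound

lemma continuous_pairingDensity (hp : 1 < p) (K : X → X → ℝ) (v : X → ℝ) (z : X × X) :
    Continuous fun u => pairingDensity K p u v z := by
  have hp0 : 0 ≤ p := by linarith
  have hrpow : Continuous fun u : X → ℝ => |u z.2| ^ p :=
    (continuous_apply z.2).abs.rpow_const fun _ => .inr hp0
  have hself : Continuous fun u : X → ℝ => |u z.1| ^ (p - 2) * u z.1 :=
    (continuous_abs_rpow_sub_two_mul_self hp).comp (continuous_apply z.1)
  exact (continuous_const.mul hrpow).mul (hself.mul continuous_const)

variable [DecidableEq X]

/-- The kernel `R` with its diagonal replaced by zero, so that `conv R` becomes an unrestricted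
sum. -/
def offDiag (R : X → X → ℝ) (x y : X) : ℝ := if y = x then 0 else R x y

lemma conv_eq_tsum_offDiag (R : X → X → ℝ) (f : X → ℝ) (x : X) :
    conv R f x = ∑' y, offDiag R x y * f y := by
  simp only [conv, offDiag, ite_mul, zero_mul]

lemma Kterm_eq_tsum_pairingDensity {R : X → X → ℝ} {u v : X → ℝ}
    (h : Summable (pairingDensity (offDiag R) p u v)) :
    Kterm R p u v = ∑' z, pairingDensity (offDiag R) p u v z := by
  rw [h.tsum_prod]
  simp only [Kterm, conv_eq_tsum_offDiag, pairingDensity, tsum_mul_right]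

lemma Kterm_self (hp : p ≠ 0) (R : X → X → ℝ) (u : X → ℝ) : Kterm R p u u = Dterm R p u := by
  have hself (t : ℝ) : |t| ^ (p - 2) * t * t = |t| ^ p := by
    rcases eq_or_ne t 0 with rfl | ht
    · simp [hp]
    · rw [mul_assoc, ← abs_mul_abs_self t, ← sq, ← Real.rpow_natCast,
        ← Real.rpow_add (abs_pos.2 ht)]
      norm_num
  simp only [Kterm, Dterm, hself]

end NonlocalTerm

section RieszKernels

lemma sum_rpow_neg_le_of_log_eq {X : Type*} {ℓ : X → ℕ} {C D β : ℝ} (hβ : 0 ≤ β)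
    (hball : ∀ r : ℝ, 1 ≤ r →
      {x | (ℓ x : ℝ) ≤ r}.Finite ∧ ({x | (ℓ x : ℝ) ≤ r}.ncard : ℝ) ≤ C * r ^ D)
    {m : ℕ} {F : Finset X} (hF : ∀ x ∈ F, Nat.log 2 (ℓ x) = m) (hF0 : ∀ x ∈ F, ℓ x ≠ 0) :
    ∑ x ∈ F, (ℓ x : ℝ) ^ (-β) ≤ C * 2 ^ D * (2 ^ (D - β)) ^ m := by
  obtain ⟨hfin, hcard⟩ := hball (2 ^ (m + 1)) (one_le_pow₀ one_le_two)
  have hsub : (F : Set X) ⊆ {x | (ℓ x : ℝ) ≤ 2 ^ (m + 1)} := fun x hx => by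
    have := Nat.lt_pow_succ_log_self one_lt_two (ℓ x)
    rw [hF x hx] at this
    exact_mod_cast this.le
  have hF_card : (F.card : ℝ) ≤ C * (2 ^ (m + 1)) ^ D := by
    refine le_trans ?_ hcard
    rw [← Set.ncard_coe_finset]
    exact_mod_cast Set.ncard_le_ncard hsub hfin
  have hterm (x : X) (hx : x ∈ F) : (ℓ x : ℝ) ^ (-β) ≤ (2 ^ m) ^ (-β) := by
    refine Real.rpow_le_rpow_of_nonpos (by positivity) ?_ (neg_nonpos.2 hβ)
    rw [← hF x hx]
    exact_mod_cast Nat.pow_log_le_self 2 (hF0 x hx)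
  calc ∑ x ∈ F, (ℓ x : ℝ) ^ (-β) ≤ F.card * (2 ^ m) ^ (-β) := by
        simpa using F.sum_le_card_nsmul _ _ hterm
    _ ≤ C * (2 ^ (m + 1)) ^ D * (2 ^ m) ^ (-β) := by gcongr
    _ = C * 2 ^ D * (2 ^ (D - β)) ^ m := by
        rw [Real.rpow_pow_comm zero_le_two, sub_eq_add_neg, Real.rpow_add (by positivity),
          pow_succ, Real.mul_rpow (by positivity) zero_le_two]
        ring

lemma summable_rpow_neg_of_ncard_le {X : Type*} {ℓ : X → ℕ} {C D β : ℝ} (hD : 0 ≤ D) (hβ : D < β)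
    (hball : ∀ r : ℝ, 1 ≤ r →
      {x | (ℓ x : ℝ) ≤ r}.Finite ∧ ({x | (ℓ x : ℝ) ≤ r}.ncard : ℝ) ≤ C * r ^ D) :
    Summable fun x => (ℓ x : ℝ) ^ (-β) := by
  have hC : 0 ≤ C := (Nat.cast_nonneg _).trans (by simpa using (hball 1 le_rfl).2)
  have hgeom : Summable fun m : ℕ => C * 2 ^ D * ((2 : ℝ) ^ (D - β)) ^ m :=
    (summable_geometric_of_lt_one (by positivity)
      (Real.rpow_lt_one_of_one_lt_of_neg one_lt_two (sub_neg.2 hβ))).mul_left _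
  refine summable_of_sum_le (c := ∑' m : ℕ, C * 2 ^ D * (2 ^ (D - β)) ^ m)
    (fun x => by positivity) fun F => ?_
  have hzero (x : X) (hx : (ℓ x : ℝ) ^ (-β) ≠ 0) : ℓ x ≠ 0 := fun h0 =>
    hx (by rw [h0, Nat.cast_zero, Real.zero_rpow (by linarith)])
  rw [← Finset.sum_filter_of_ne fun x _ => hzero x,
    ← Finset.sum_fiberwise_of_maps_to fun x hx => Finset.mem_image_of_mem (Nat.log 2 ∘ ℓ) hx]
  refine (Finset.sum_le_sum fun m _ => ?_).trans
    (hgeom.sum_le_tsum _ fun m _ => by positivity)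
  refine sum_rpow_neg_le_of_log_eq (hD.trans hβ.le) hball ?_ ?_ <;> simp +contextual

variable [Group G] {S : Finset G} {N : ℕ} {α s : ℝ} {R : G → G → ℝ}

lemma wordDist_eq_wordDist_one (S : Finset G) (x y : G) :
    wordDist S x y = wordDist S (y⁻¹ * x) 1 := by
  simp only [wordDist, mul_inv_rev, inv_inv, mul_one]

lemma PolyGrowth.summable_wordDist_rpow (hG : PolyGrowth S N) {β : ℝ} (hβ : N < β) :
    Summable fun g => (wordDist S g 1 : ℝ) ^ (-β) := by
  obtain ⟨C₁, C₂, hC₁, -, hball⟩ := hG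
  refine summable_rpow_neg_of_ncard_le (C := C₂) N.cast_nonneg hβ fun r hr => ⟨?_, ?_⟩
  · refine Set.finite_of_ncard_pos ?_
    exact_mod_cast (by positivity : 0 < C₁ * r ^ N).trans_le (hball r hr).1
  · rw [Real.rpow_natCast]
    exact (hball r hr).2

lemma RieszKernel.schurBound [DecidableEq G] (hR : RieszKernel S N α R) (hG : PolyGrowth S N)
    (hs : 0 < s) (hNs : N < (N - α) * s) : ∃ Z, SchurBound s (offDiag R) Z := by
  obtain ⟨hpos, _, c₂, -, hc₂, hle⟩ := hR
  refine ⟨_, schurBound_of_abs_rpow_le ((hG.summable_wordDist_rpow hNs).mul_left (c₂ ^ s))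
    fun x y => ?_⟩
  rcases eq_or_ne y x with hyx | hyx
  · rw [offDiag, if_pos hyx, abs_zero, Real.zero_rpow hs.ne']
    positivity
  · rw [offDiag, if_neg hyx, abs_of_pos (hpos x y), ← wordDist_eq_wordDist_one]
    calc R x y ^ s ≤ (c₂ * (wordDist S x y : ℝ) ^ (α - N)) ^ s :=
          Real.rpow_le_rpow (hpos x y).le (hle x y hyx.symm).2 hs.le
      _ = c₂ ^ s * (wordDist S x y : ℝ) ^ (-((N - α) * s)) := by
          rw [Real.mul_rpow hc₂.le (by positivity), ← Real.rpow_mul (by positivity)]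
          ring_nf

lemma exists_schur_exponent {N α p : ℝ} (hN : 0 < N) (hα0 : 0 ≤ α) (hαN : α < N)
    (hp : (N + α) / N < p) : ∃ s, 1 ≤ s ∧ 2 - 1 / s ≤ p ∧ N < (N - α) * s := by
  have hlt : max (2 - p) 0 < (N - α) / N := by
    refine max_lt ?_ (div_pos (sub_pos.2 hαN) hN)
    rw [show (N - α) / N = 2 - (N + α) / N by field_simp; ring]
    linarith
  obtain ⟨θ, hmax, hθ⟩ := exists_between hlt
  obtain ⟨hpθ, hθ0⟩ := max_lt_iff.1 hmax
  rw [lt_div_iff₀ hN] at hθ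
  refine ⟨θ⁻¹, (one_le_inv₀ hθ0).2 (by nlinarith), by simpa using by linarith, ?_⟩
  rwa [lt_mul_inv_iff₀ hθ0, mul_comm]

end RieszKernels

section EnergySpace

variable {ι : Type*} [Group G] {S : Finset G} {a : G → ℝ} {lam A : ℝ} {u v : G → ℝ}

/-- The summand of the inner product `⟨u, v⟩` of `E_λ`. -/
def innerDensity (S : Finset G) (a : G → ℝ) (lam : ℝ) (u v : G → ℝ) (x : G) : ℝ :=
  lap S u x * lap S v x + grad S u v x + (1 + lam * a x) * (u x * v x)

lemma innerDensity_self (S : Finset G) (a : G → ℝ) (lam : ℝ) (u : G → ℝ) :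
    innerDensity S a lam u u = eDensity S a lam u := by
  ext x
  simp only [innerDensity, eDensity, sq]

lemma innerE_self (S : Finset G) (a : G → ℝ) (lam : ℝ) (u : G → ℝ) :
    innerE S a lam u u = normEsq S a lam u :=
  congrArg tsum (innerDensity_self S a lam u)

lemma innerDensity_smul_right (S : Finset G) (a : G → ℝ) (lam t : ℝ) (u v : G → ℝ) (x : G) :
    innerDensity S a lam u (t • v) x = t * innerDensity S a lam u v x := by
  simp only [innerDensity, lap, grad, Pi.smul_apply, smul_eq_mul, ← mul_sub, ← Finset.mul_sum,
    mul_left_comm _ t, ← mul_add]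

lemma eDensity_smul (S : Finset G) (a : G → ℝ) (lam t : ℝ) (u : G → ℝ) (x : G) :
    eDensity S a lam (t • u) x = t ^ 2 * eDensity S a lam u x := by
  simp only [eDensity, lap, grad, Pi.smul_apply, smul_eq_mul, ← mul_sub, ← Finset.mul_sum,
    mul_mul_mul_comm]
  ring

lemma eDensity_smul_add (S : Finset G) (a : G → ℝ) (lam t : ℝ) (u v : G → ℝ) (x : G) :
    eDensity S a lam (t • u + v) x =
      t ^ 2 * eDensity S a lam u x + 2 * t * innerDensity S a lam u v x + eDensity S a lam v x := by
  have hlap : lap S (t • u + v) x = t * lap S u x + lap S v x := by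
    simp only [lap, Pi.add_apply, Pi.smul_apply, smul_eq_mul, Finset.mul_sum,
      ← Finset.sum_add_distrib]
    exact Finset.sum_congr rfl fun g _ => by ring
  have hgrad : grad S (t • u + v) (t • u + v) x =
      t ^ 2 * grad S u u x + 2 * t * grad S u v x + grad S v v x := by
    simp only [grad, Pi.add_apply, Pi.smul_apply, smul_eq_mul, Finset.mul_sum,
      ← Finset.sum_add_distrib]
    exact Finset.sum_congr rfl fun g _ => by ring
  simp only [eDensity, innerDensity, hlap, hgrad, Pi.add_apply, Pi.smul_apply, smul_eq_mul]
  ring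

lemma grad_self_nonneg (S : Finset G) (u : G → ℝ) (x : G) : 0 ≤ grad S u u x :=
  mul_nonneg (by norm_num) (Finset.sum_nonneg fun _ _ => mul_self_nonneg _)

lemma sq_le_eDensity (ha : ∀ x, 0 ≤ lam * a x) (S : Finset G) (u : G → ℝ) (x : G) :
    u x ^ 2 ≤ eDensity S a lam u x := by
  have := mul_nonneg (ha x) (sq_nonneg (u x))
  have := sq_nonneg (lap S u x)
  have := grad_self_nonneg S u x
  unfold eDensity
  linarith

lemma eDensity_nonneg (ha : ∀ x, 0 ≤ lam * a x) (S : Finset G) (u : G → ℝ) (x : G) :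
    0 ≤ eDensity S a lam u x :=
  (sq_nonneg (u x)).trans (sq_le_eDensity ha S u x)

lemma normEsq_nonneg (ha : ∀ x, 0 ≤ lam * a x) (S : Finset G) (u : G → ℝ) :
    0 ≤ normEsq S a lam u :=
  tsum_nonneg (eDensity_nonneg ha S u)

lemma normE_nonneg (S : Finset G) (a : G → ℝ) (lam : ℝ) (u : G → ℝ) : 0 ≤ normE S a lam u :=
  Real.sqrt_nonneg _

lemma normE_sq (ha : ∀ x, 0 ≤ lam * a x) (S : Finset G) (u : G → ℝ) :
    normE S a lam u ^ 2 = normEsq S a lam u :=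
  Real.sq_sqrt (normEsq_nonneg ha S u)

lemma abs_innerDensity_le (ha : ∀ x, 0 ≤ lam * a x) (S : Finset G) (u v : G → ℝ) {δ : ℝ}
    (hδ : 0 < δ) (x : G) :
    |innerDensity S a lam u v x| ≤ δ * eDensity S a lam u x + δ⁻¹ * eDensity S a lam v x := by
  have hplus := eDensity_nonneg ha S (δ • u + v) x
  have hminus := eDensity_nonneg ha S (-δ • u + v) x
  rw [eDensity_smul_add] at hplus hminus
  have := mul_nonneg (sq_nonneg δ) (eDensity_nonneg ha S u x)
  have := eDensity_nonneg ha S v x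
  have key : δ * |innerDensity S a lam u v x| ≤
      δ ^ 2 * eDensity S a lam u x + eDensity S a lam v x := by
    rw [← abs_of_pos hδ, ← abs_mul, abs_of_pos hδ, abs_le]
    constructor <;> linarith
  calc |innerDensity S a lam u v x| = δ⁻¹ * (δ * |innerDensity S a lam u v x|) := by
        field_simp
    _ ≤ δ⁻¹ * (δ ^ 2 * eDensity S a lam u x + eDensity S a lam v x) := by gcongr
    _ = _ := by field_simp

lemma MemE.mem_l2Ball (ha : ∀ x, 0 ≤ lam * a x) (hu : MemE S a lam u)
    (hA : normEsq S a lam u ≤ A) : u ∈ l2Ball G A := by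
  have hsum : Summable fun x => u x ^ 2 :=
    .of_nonneg_of_le (fun x => sq_nonneg (u x)) (sq_le_eDensity ha S u) hu
  exact ⟨hsum, (hsum.tsum_le_tsum (sq_le_eDensity ha S u) hu).trans hA⟩

lemma MemE.smul (hu : MemE S a lam u) (t : ℝ) : MemE S a lam (t • u) :=
  (hu.mul_left (t ^ 2)).congr fun x => (eDensity_smul S a lam t u x).symm

lemma normEsq_smul (S : Finset G) (a : G → ℝ) (lam t : ℝ) (u : G → ℝ) :
    normEsq S a lam (t • u) = t ^ 2 * normEsq S a lam u := by
  simp only [normEsq, eDensity_smul, tsum_mul_left]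

lemma MemE.abs_innerE_le (ha : ∀ x, 0 ≤ lam * a x) (hu : MemE S a lam u) (hv : MemE S a lam v) :
    |innerE S a lam u v| ≤ normEsq S a lam u + normEsq S a lam v := by
  have hle (x : G) : ‖innerDensity S a lam u v x‖ ≤
      eDensity S a lam u x + eDensity S a lam v x := by
    simpa using abs_innerDensity_le ha S u v one_pos x
  rw [normEsq, normEsq, ← hu.tsum_add hv]
  exact tsum_of_norm_bounded (hu.add hv).hasSum hle

lemma MemE.summable_innerDensity (ha : ∀ x, 0 ≤ lam * a x) (hu : MemE S a lam u)
    (hv : MemE S a lam v) : Summable (innerDensity S a lam u v) :=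
  .of_norm_bounded ((hu.mul_left 1).add (hv.mul_left 1⁻¹)) (abs_innerDensity_le ha S u v one_pos)

lemma almostDominated_innerDensity (ha : ∀ x, 0 ≤ lam * a x) {U : ι → G → ℝ}
    (hU : ∀ i, MemE S a lam (U i)) (hA : ∀ i, normEsq S a lam (U i) ≤ A) (hv : MemE S a lam v) :
    AlmostDominated fun i => innerDensity S a lam (U i) v :=
  .of_forall_abs_le hU (fun i => eDensity_nonneg ha S (U i)) hA (almostDominated_const hv)
    fun δ hδ => ⟨δ⁻¹, by positivity, fun i => abs_innerDensity_le ha S (U i) v hδ⟩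

lemma continuous_innerDensity (S : Finset G) (a : G → ℝ) (lam : ℝ) (v : G → ℝ) (x : G) :
    Continuous fun u => innerDensity S a lam u v x := by
  unfold innerDensity lap grad
  fun_prop

lemma continuous_eDensity (S : Finset G) (a : G → ℝ) (lam : ℝ) (x : G) :
    Continuous fun u => eDensity S a lam u x := by
  unfold eDensity lap grad
  fun_prop

lemma memE_of_tendsto (ha : ∀ x, 0 ≤ lam * a x) {l : Filter ι} [l.NeBot] {U : ι → G → ℝ}
    (hU : ∀ i, MemE S a lam (U i)) (hA : ∀ i, normEsq S a lam (U i) ≤ A)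
    (hlim : Tendsto U l (nhds u)) : MemE S a lam u := by
  refine summable_of_sum_le (c := A) (eDensity_nonneg ha S u) fun F => ?_
  refine le_of_tendsto (tendsto_finsetSum F fun x _ =>
    ((continuous_eDensity S a lam x).tendsto u).comp hlim) (.of_forall fun i => ?_)
  exact ((hU i).sum_le_tsum F fun x _ => eDensity_nonneg ha S (U i) x).trans (hA i)

end EnergySpace

section Functional

variable {ι : Type*} [Group G] [DecidableEq G] {S : Finset G} {a : G → ℝ} {lam p s Z A c : ℝ}
  {R : G → G → ℝ} {u v : G → ℝ}

lemma Jd_smul_right (S : Finset G) (a : G → ℝ) (lam : ℝ) (R : G → G → ℝ) (p : ℝ) (u : G → ℝ)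
    (t : ℝ) (v : G → ℝ) : Jd S a lam R p u (t • v) = t * Jd S a lam R p u v := by
  have hinner : innerE S a lam u (t • v) = t * innerE S a lam u v :=
    (tsum_congr (innerDensity_smul_right S a lam t u v)).trans tsum_mul_left
  have hK : Kterm R p u (t • v) = t * Kterm R p u v := by
    simp only [Kterm, Pi.smul_apply, smul_eq_mul, mul_left_comm _ t, tsum_mul_left]
  rw [Jd, hinner, hK, ← mul_sub, Jd]

lemma Jd_self (hp : p ≠ 0) (S : Finset G) (a : G → ℝ) (lam : ℝ) (R : G → G → ℝ) (u : G → ℝ) :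
    Jd S a lam R p u u = normEsq S a lam u - Dterm R p u := by
  rw [Jd, innerE_self, Kterm_self hp]

lemma sub_one_mul_normEsq (hp : p ≠ 0) (S : Finset G) (a : G → ℝ) (lam : ℝ) (R : G → G → ℝ)
    (u : G → ℝ) :
    (p - 1) * normEsq S a lam u = 2 * p * Jfun S a lam R p u - Jd S a lam R p u u := by
  rw [Jd_self hp, Jfun]
  field_simp
  ring

lemma bddAbove_abs_Jd (ha : ∀ x, 0 ≤ lam * a x) (hs : 1 ≤ s) (hp : 1 < p)
    (hps : 2 - 1 / s ≤ p) (hR : SchurBound s (offDiag R) Z) (hu : MemE S a lam u) :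
    BddAbove {t | ∃ v, MemE S a lam v ∧ normEsq S a lam v ≤ 1 ∧ t = |Jd S a lam R p u v|} := by
  obtain ⟨C, hC⟩ := hR.exists_abs_tsum_pairingDensity_le hp hs hps (max (normEsq S a lam u) 1)
  refine ⟨normEsq S a lam u + 1 + C, ?_⟩
  rintro _ ⟨v, hv, hv1, rfl⟩
  obtain ⟨hsum, hle⟩ := hC u (hu.mem_l2Ball ha (le_max_left _ _)) v
    (hv.mem_l2Ball ha (hv1.trans (le_max_right _ _)))
  rw [Jd, Kterm_eq_tsum_pairingDensity hsum]
  calc _ ≤ |innerE S a lam u v| + |∑' z, pairingDensity (offDiag R) p u v z| := abs_sub _ _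
    _ ≤ normEsq S a lam u + 1 + C := by linarith [hu.abs_innerE_le ha hv]

lemma abs_Jd_le (ha : ∀ x, 0 ≤ lam * a x) (hs : 1 ≤ s) (hp : 1 < p) (hps : 2 - 1 / s ≤ p)
    (hR : SchurBound s (offDiag R) Z) (hu : MemE S a lam u) (hv : MemE S a lam v) :
    |Jd S a lam R p u v| ≤ dualNorm S a lam R p u * normE S a lam v := by
  set t := normE S a lam v
  have hsq : t ^ 2 = normEsq S a lam v := normE_sq ha S v
  rcases (normE_nonneg S a lam v).eq_or_lt with (h0 : 0 = t) | (hpos : 0 < t)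
  · have hv0 : v = (0 : ℝ) • v := funext fun x => by
      have := abs_le_sqrt_of_mem_l2Ball (hv.mem_l2Ball ha hsq.ge) x
      simpa [← h0] using this
    rw [hv0, Jd_smul_right, ← h0]
    simp
  · have hunit : |Jd S a lam R p u (t⁻¹ • v)| ≤ dualNorm S a lam R p u := by
      refine le_csSup (bddAbove_abs_Jd ha hs hp hps hR hu) ⟨t⁻¹ • v, hv.smul _, ?_, rfl⟩
      rw [normEsq_smul, ← hsq, ← mul_pow, inv_mul_cancel₀ hpos.ne', one_pow]
    rwa [Jd_smul_right, abs_mul, abs_of_pos (inv_pos.2 hpos), inv_mul_le_iff₀' hpos] at hunit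

lemma PSseq.exists_normEsq_le (ha : ∀ x, 0 ≤ lam * a x) (hs : 1 ≤ s) (hp : 1 < p)
    (hps : 2 - 1 / s ≤ p) (hR : SchurBound s (offDiag R) Z) {U : ℕ → G → ℝ}
    (hU : PSseq S a lam R p c U) : ∃ A, ∀ n, normEsq S a lam (U n) ≤ A := by
  obtain ⟨hmem, hJ, hdual⟩ := hU
  obtain ⟨M, hM⟩ := hJ.bddAbove_range
  obtain ⟨D, hD⟩ := hdual.bddAbove_range
  refine ⟨4 * p * M / (p - 1) + (D / (p - 1)) ^ 2, fun n => ?_⟩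
  have hp1 : 0 < p - 1 := by linarith
  set t := normE S a lam (U n)
  have hsq : t ^ 2 = normEsq S a lam (U n) := normE_sq ha S (U n)
  have hquad : (p - 1) * t ^ 2 ≤ 2 * p * M + D * t := by
    rw [hsq, sub_one_mul_normEsq (by linarith) S a lam R]
    have hMn : Jfun S a lam R p (U n) ≤ M := hM ⟨n, rfl⟩
    have hDn : dualNorm S a lam R p (U n) * t ≤ D * t :=
      mul_le_mul_of_nonneg_right (hD ⟨n, rfl⟩) (normE_nonneg S a lam (U n))
    have hJd := abs_Jd_le ha hs hp hps hR (hmem n) (hmem n)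
    nlinarith [neg_abs_le (Jd S a lam R p (U n) (U n))]
  have hdiv : t ^ 2 ≤ 2 * p * M / (p - 1) + D / (p - 1) * t := by
    rw [div_mul_eq_mul_div, ← add_div, le_div_iff₀' hp1]
    exact hquad
  have amgm := two_mul_le_add_sq (D / (p - 1)) t
  rw [← hsq, show 4 * p * M / (p - 1) = 2 * (2 * p * M / (p - 1)) by ring]
  linarith

lemma tendsto_Jd (ha : ∀ x, 0 ≤ lam * a x) (hs : 1 ≤ s) (hp : 1 < p) (hps : 2 - 1 / s ≤ p)
    (hR : SchurBound s (offDiag R) Z) {l : Filter ι} {U : ι → G → ℝ}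
    (hU : ∀ i, MemE S a lam (U i)) (hA : ∀ i, normEsq S a lam (U i) ≤ A)
    (hlim : Tendsto U l (nhds u)) (hu : MemE S a lam u) (hv : MemE S a lam v) :
    Tendsto (fun i => Jd S a lam R p (U i) v) l (nhds (Jd S a lam R p u v)) := by
  have hinner : Tendsto (fun i => innerE S a lam (U i) v) l (nhds (innerE S a lam u v)) :=
    (almostDominated_innerDensity ha hU hA hv).tendsto_tsum (hu.summable_innerDensity ha hv)
      fun x => ((continuous_innerDensity S a lam v x).tendsto u).comp hlim
  set B := max A (max (normEsq S a lam u) (normEsq S a lam v))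
  have hUB (i : ι) : U i ∈ l2Ball G B := (hU i).mem_l2Ball ha ((hA i).trans (le_max_left _ _))
  have huB : u ∈ l2Ball G B := hu.mem_l2Ball ha ((le_max_left _ _).trans (le_max_right _ _))
  have hvB : v ∈ l2Ball G B := hv.mem_l2Ball ha ((le_max_right _ _).trans (le_max_right _ _))
  obtain ⟨C, hC⟩ := hR.exists_abs_tsum_pairingDensity_le hp hs hps B
  have hK : Tendsto (fun i => Kterm R p (U i) v) l (nhds (Kterm R p u v)) := by
    simp only [Kterm_eq_tsum_pairingDensity (hC _ (hUB _) v hvB).1,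
      Kterm_eq_tsum_pairingDensity (hC u huB v hvB).1]
    exact (hR.almostDominated_pairingDensity hp hs hps hUB hvB).tendsto_tsum
      (hC u huB v hvB).1
      fun z => ((continuous_pairingDensity hp (offDiag R) v z).tendsto u).comp hlim
  exact hinner.sub hK

theorem PS_weak_limit_critical_general [Countable G] (ha : ∀ x, 0 ≤ lam * a x) (hs : 1 ≤ s)
    (hp : 1 < p) (hps : 2 - 1 / s ≤ p) (hR : SchurBound s (offDiag R) Z) {U : ℕ → G → ℝ}
    (hU : PSseq S a lam R p c U) :
    ∃ φ : ℕ → ℕ, StrictMono φ ∧ ∃ u : G → ℝ, MemE S a lam u ∧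
      (∀ x, Tendsto (fun n => U (φ n) x) atTop (nhds (u x))) ∧
      ∀ v : G → ℝ, MemE S a lam v → Jd S a lam R p u v = 0 := by
  obtain ⟨A, hA⟩ := hU.exists_normEsq_le ha hs hp hps hR
  obtain ⟨hmem, -, hdual⟩ := hU
  obtain ⟨u, φ, hφ, hlim⟩ :=
    exists_subseq_tendsto_of_mem_l2Ball fun n => (hmem n).mem_l2Ball ha (hA n)
  have hu : MemE S a lam u := memE_of_tendsto ha (fun n => hmem (φ n)) (fun n => hA (φ n)) hlim
  refine ⟨φ, hφ, u, hu, tendsto_pi_nhds.1 hlim, fun v hv => ?_⟩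
  have hJd : Tendsto (fun n => Jd S a lam R p (U (φ n)) v) atTop (nhds (Jd S a lam R p u v)) :=
    tendsto_Jd ha hs hp hps hR (fun n => hmem (φ n)) (fun n => hA (φ n)) hlim hu hv
  have hbound : Tendsto (fun n => dualNorm S a lam R p (U (φ n)) * normE S a lam v) atTop
      (nhds 0) := by
    simpa using (hdual.comp hφ.tendsto_atTop).mul_const (normE S a lam v)
  exact tendsto_nhds_unique hJd (squeeze_zero_norm
    (fun n => abs_Jd_le ha hs hp hps hR (hmem (φ n)) hv) hbound)

end Functional

theorem PS_weak_limit_critical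
    {G : Type*} [Group G] [Countable G] [DecidableEq G]
    (S : Finset G) (hSsymm : ∀ s ∈ S, s⁻¹ ∈ S)
    (hSgen : Subgroup.closure (S : Set G) = ⊤)
    (N : ℕ) (hN : 2 ≤ N) (hgrowth : PolyGrowth S N)
    (α : ℝ) (hα0 : 0 < α) (hαN : α < (N : ℝ))
    (R : G → G → ℝ) (hR : RieszKernel S N α R)
    (p : ℝ) (hp : ((N : ℝ) + α) / (N : ℝ) < p)
    (a : G → ℝ) (ha : ∀ x, 0 ≤ a x)
    (lam : ℝ) (hlam : 0 < lam)
    (c : ℝ) (U : ℕ → G → ℝ) (hU : PSseq S a lam R p c U) :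
    ∃ φ : ℕ → ℕ, StrictMono φ ∧ ∃ u : G → ℝ, MemE S a lam u ∧
      (∀ x, Tendsto (fun n => U (φ n) x) atTop (nhds (u x))) ∧
      ∀ v : G → ℝ, MemE S a lam v → Jd S a lam R p u v = 0 := by
  have hN0 : (0 : ℝ) < N := by positivity
  obtain ⟨s, hs, hps, hNs⟩ := exists_schur_exponent hN0 hα0.le hαN hp
  obtain ⟨Z, hZ⟩ := hR.schurBound hgrowth (one_pos.trans_le hs) hNs
  have hp1 : 1 < p := ((one_lt_div hN0).2 (by linarith)).trans hp
  exact PS_weak_limit_critical_general (fun x => mul_nonneg hlam.le (ha x)) hs hp1 hps hZ hU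

end Choquard
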